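/- Let 2 ≤ k ≤ n and let G be a d-regular graph on n vertices. Then G contains an independent set of k vertices if and only if there exist a vertex set U ⊆ V(G), a set D of edges of G−U, and a set A of unordered pairs of distinct non-adjacent vertices of V(G)∖U, with |U| + |D| + |A| ≤ k(k−1)/2, such that the degree multiset of G−U−D+A consists of k copies of d+(k−1) and n−k copies of d. -/

import Mathlib

/-- The degree of a vertex, as the `ncard` of its neighbor set. -/
noncomputable def ndeg {V : Type*} (H : SimpleGraph V) (v : V) : ℕ :=
  (H.neighborSet v).ncard

/-- The graph `G - U - D + A`, obtained from `G` by deleting the vertices of `U`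
(together with all incident edges), deleting the edges of `D` and adding the pairs of `A`
as edges. (The deleted vertices become isolated; degrees are only read off `V ∖ U`.) -/
def edit {V : Type*} (G : SimpleGraph V) (U : Finset V) (D A : Set (Sym2 V)) :
    SimpleGraph V :=
  SimpleGraph.fromEdgeSet ((G.edgeSet \ (D ∪ {e : Sym2 V | ∃ u ∈ U, u ∈ e})) ∪ A)

lemma ndeg_eq_degree {V : Type*} [Fintype V] (H : SimpleGraph V) [DecidableRel H.Adj] (v : V) :
    ndeg H v = H.degree v := by
  unfold ndeg
  rw [Set.ncard_eq_toFinset_card', SimpleGraph.degree, SimpleGraph.neighborFinset]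

lemma edit_adj {V : Type*} (G : SimpleGraph V) (D A : Set (Sym2 V)) (v w : V) :
    (edit G ∅ D A).Adj v w ↔ ((G.Adj v w ∧ s(v, w) ∉ D) ∨ s(v, w) ∈ A) ∧ v ≠ w := by
  have := fun h : G.Adj v w => h.ne
  simp [edit]
  grind

lemma forward_aux {V : Type*} [Fintype V] [DecidableEq V] (n k d : ℕ)
    (hn : Fintype.card V = n) (G : SimpleGraph V)
    (hreg : ∀ v : V, ndeg G v = d) (S : Finset V) (hS : S.card = k)
    (hI : ∀ u ∈ S, ∀ v ∈ S, u ≠ v → ¬ G.Adj u v) :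
    ((Finset.univ \ (∅ : Finset V)).val.map fun v =>
      ndeg (edit G ∅ ↑(∅ : Finset (Sym2 V)) ↑(S.offDiag.image Sym2.mk.uncurry)) v) =
          Multiset.replicate k (d + (k - 1)) + Multiset.replicate (n - k) d := by
  have hA : ∀ v w, s(v, w) ∈ (S.offDiag.image Sym2.mk.uncurry) ↔ v ∈ S ∧ w ∈ S ∧ v ≠ w := by
    intro v w
    simp only [Finset.mem_image, Finset.mem_offDiag, Prod.exists, Function.uncurry, Sym2.eq_iff]
    constructor
    · rintro ⟨a, b, h, ⟨rfl, rfl⟩ | ⟨rfl, rfl⟩⟩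
      · exact h
      · exact ⟨h.2.1, h.1, h.2.2.symm⟩
    · intro h
      exact ⟨v, w, h, Or.inl ⟨rfl, rfl⟩⟩
  have h1 : ∀ v ∈ S, ndeg (edit G ∅ ↑(∅ : Finset (Sym2 V))
      ↑(S.offDiag.image Sym2.mk.uncurry)) v = d + (k - 1) := by
    intro v hv
    rw [← hreg v, ← hS, ← Finset.card_erase_of_mem hv, ← Set.ncard_coe_finset]
    unfold ndeg
    rw [← Set.ncard_union_eq _ (Set.toFinite _) (Set.toFinite _)]
    · congr 1
      ext w
      simp only [SimpleGraph.mem_neighborSet, edit_adj, Finset.mem_coe, hA, Set.mem_union,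
        Finset.mem_erase, Finset.notMem_empty, not_false_eq_true, and_true]
      have := fun h : G.Adj v w => h.ne
      grind
    · rw [Set.disjoint_left]
      intro w hw hw'
      simp only [Finset.mem_coe, Finset.mem_erase] at hw'
      exact hI v hv w hw'.2 hw'.1.symm hw
  have h2 : ∀ v ∈ Sᶜ, ndeg (edit G ∅ ↑(∅ : Finset (Sym2 V))
      ↑(S.offDiag.image Sym2.mk.uncurry)) v = d := by
    intro v hv
    rw [← hreg v]
    unfold ndeg
    congr 1
    ext w
    simp only [SimpleGraph.mem_neighborSet, edit_adj, Finset.mem_coe, hA,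
        Finset.notMem_empty, not_false_eq_true, and_true]
    have := fun h : G.Adj v w => h.ne
    have := Finset.mem_compl.1 hv
    grind
  have hu : (Finset.univ \ (∅ : Finset V)).val = S.val + (Sᶜ).val := by
    rw [Finset.sdiff_empty, ← Finset.disjUnion_val S Sᶜ disjoint_compl_right]
    simp
  rw [hu, Multiset.map_add, Multiset.map_congr rfl h1, Multiset.map_congr rfl h2]
  simp [Finset.card_compl, hS, hn]

lemma backward_aux {V : Type*} [Fintype V] [DecidableEq V] (n k d : ℕ) (hk : 2 ≤ k)
    (G : SimpleGraph V) (hreg : ∀ v : V, ndeg G v = d) (D A : Finset (Sym2 V))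
    (hA : ∀ e ∈ A, ¬ e.IsDiag ∧ e ∉ G.edgeSet)
    (hc : A.card ≤ k * (k - 1) / 2)
    (hm : (Finset.univ.val.map fun v => ndeg (edit G ∅ ↑D ↑A) v) =
          Multiset.replicate k (d + (k - 1)) + Multiset.replicate (n - k) d) :
    ∃ S : Finset V, S.card = k ∧ ∀ u ∈ S, ∀ v ∈ S, u ≠ v → ¬ G.Adj u v := by
  classical
  set f : V → ℕ := fun v => ndeg (edit G ∅ ↑D ↑A) v with hf
  set S : Finset V := Finset.univ.filter (fun v => d + (k - 1) = f v) with hSdef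
  have hS : S.card = k := by
    have := congrArg (Multiset.count (d + (k - 1))) hm
    rw [Multiset.count_map, Multiset.count_add, Multiset.count_replicate_self,
      Multiset.count_replicate, if_neg (by omega), add_zero] at this
    exact this
  let H : SimpleGraph V := SimpleGraph.fromEdgeSet (A : Set (Sym2 V))
  have hadj : ∀ v w, H.Adj v w ↔ s(v, w) ∈ A := by
    intro v w
    simp only [H, SimpleGraph.fromEdgeSet_adj, Finset.mem_coe, and_iff_left_iff_imp]
    intro h
    simpa using (hA _ h).1
  have hE : H.edgeFinset = A := by
    ext e
    induction e with
    | _ v w => rw [SimpleGraph.mem_edgeFinset, SimpleGraph.mem_edgeSet, hadj]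
  have hsum : ∑ v, H.degree v = 2 * A.card := by
    rw [H.sum_degrees_eq_twice_card_edges]
    congr 2
    convert hE
  have hle : ∀ v ∈ S, k - 1 ≤ H.degree v := by
    intro v hv
    have h1 : f v ≤ d + H.degree v := by
      rw [← hreg v, ← ndeg_eq_degree]
      refine le_trans (Set.ncard_le_ncard ?_ (Set.toFinite _)) (Set.ncard_union_le _ _)
      intro w hw
      rw [SimpleGraph.mem_neighborSet, edit_adj] at hw
      simp only [Set.mem_union, SimpleGraph.mem_neighborSet, hadj]
      rcases hw.1 with h | h
      · exact Or.inl h.1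
      · exact Or.inr h
    have h2 : d + (k - 1) = f v := (Finset.mem_filter.1 hv).2
    omega
  have hsS : k * (k - 1) ≤ ∑ v ∈ S, H.degree v := by
    have := Finset.card_nsmul_le_sum S _ _ hle
    rwa [hS, smul_eq_mul] at this
  have hsplit := Finset.sum_add_sum_compl S (fun v => H.degree v)
  have h0 : ∑ v ∈ Sᶜ, H.degree v = 0 := by omega
  have hz : ∀ v, v ∉ S → H.degree v = 0 := fun v hv =>
    (Finset.sum_eq_zero_iff.1 h0) v (Finset.mem_compl.2 hv)
  refine ⟨S, hS, fun u hu v hv huv hG => ?_⟩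
  have hsub : H.neighborFinset u ⊆ S.erase u := by
    intro w hw
    rw [SimpleGraph.mem_neighborFinset] at hw
    refine Finset.mem_erase.2 ⟨hw.ne', ?_⟩
    by_contra hwS
    have h3 : 0 < H.degree w := (H.degree_pos_iff_exists_adj w).2 ⟨u, hw.symm⟩
    have := hz w hwS
    omega
  have heq : H.neighborFinset u = S.erase u := by
    apply Finset.eq_of_subset_of_card_le hsub
    rw [Finset.card_erase_of_mem hu, hS, SimpleGraph.card_neighborFinset_eq_degree]
    exact hle u hu
  have hv' : v ∈ H.neighborFinset u := by
    rw [heq]; exact Finset.mem_erase.2 ⟨huv.symm, hv⟩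
  rw [SimpleGraph.mem_neighborFinset, hadj] at hv'
  exact (hA _ hv').2 hG

theorem indepSet_iff_edit_to_degree_sequence
    {V : Type*} [Fintype V] [DecidableEq V] (n k d : ℕ) (hk : 2 ≤ k) (hkn : k ≤ n)
    (hn : Fintype.card V = n) (G : SimpleGraph V)
    (hreg : ∀ v : V, ndeg G v = d) :
    (∃ S : Finset V, S.card = k ∧ ∀ u ∈ S, ∀ v ∈ S, u ≠ v → ¬ G.Adj u v) ↔
      ∃ (U : Finset V) (D A : Finset (Sym2 V)),
        (∀ e ∈ D, e ∈ G.edgeSet ∧ ∀ u ∈ U, u ∉ e) ∧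
        (∀ e ∈ A, ¬ e.IsDiag ∧ e ∉ G.edgeSet ∧ ∀ u ∈ U, u ∉ e) ∧
        U.card + D.card + A.card ≤ k * (k - 1) / 2 ∧
        ((Finset.univ \ U).val.map fun v => ndeg (edit G U ↑D ↑A) v) =
          Multiset.replicate k (d + (k - 1)) + Multiset.replicate (n - k) d := by
  constructor
  · rintro ⟨S, hS, hI⟩
    refine ⟨∅, ∅, S.offDiag.image Sym2.mk.uncurry, by simp, ?_, ?_, ?_⟩
    · intro e he
      simp only [Finset.mem_image, Finset.mem_offDiag, Prod.exists, Function.uncurry] at he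
      obtain ⟨a, b, ⟨ha, hb, hab⟩, rfl⟩ := he
      exact ⟨by simpa using hab, by simpa using hI a ha b hb hab, by simp⟩
    · rw [Sym2.card_image_offDiag, hS, Nat.choose_two_right]
      simp
    · exact forward_aux n k d hn G hreg S hS hI
  · rintro ⟨U, D, A, -, hA, hc, hm⟩
    have hU : U = ∅ := by
      have := congrArg Multiset.card hm
      simp only [Multiset.card_map, Finset.card_val, Multiset.card_add,
        Multiset.card_replicate] at this
      rw [Finset.card_univ_sdiff, hn] at this
      rw [← Finset.card_eq_zero]
      have := Finset.card_le_univ U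
      omega
    subst hU
    rw [Finset.sdiff_empty] at hm
    exact backward_aux n k d hk G hreg D A (fun e he => ⟨(hA e he).1, (hA e he).2.1⟩)
      (by omega) hm
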